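/- For a positive integer w, the derivative at s = 0 of the (analytically continued) Barnes double zeta function satisfies ζ_B'(0; 1/w, 1, 1) = (1/w) ζ_R'(−1) − (1/(12w)) log w − (1/w) Σ_{j=1}^{w−1} j · log Γ(j/w) + ((w−1)/4) log 2π. -/

import Mathlib

/-- The Barnes double zeta function, defined for `Re s > 2` by the double series
`ζ_B(s; a, b, x) = Σ_{m,n≥0} (a m + b n + x)^{-s}`. -/
noncomputable def barnesZeta (s : ℂ) (a b x : ℝ) : ℂ :=
  ∑' p : ℕ × ℕ, ((a * p.1 + b * p.2 + x : ℝ) : ℂ) ^ (-s)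

/-!
Writing `m = w q + j` splits the double series of `ζ_B(s; 1/w, 1, 1)` into the series
`ζ_B(s; 1, 1, 1 + j/w)` with `0 ≤ j < w`. In each of these the terms depend only on the sum of the
two indices, so summation along antidiagonals gives `ζ_H(s - 1; j/w) - (j/w) ζ_H(s; j/w)`, and the
distribution relation for `ζ_H(s - 1; ·)` turns this into a combination of zeta functions that is
holomorphic away from `s = 1, 2`. By the identity theorem it is the continuation.

Its derivative at `0` is given by Lerch's formula for `ζ_H'(0; x)`. To prove the latter, interpolate
`t ↦ t ^ (-s)` linearly between consecutive integers: the errors at the points `n + 1 + x` are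
`O(n ^ (-Re s - 2))`, so they can be summed and differentiated at `s = 0`. There the partial sums
of the derivatives are those of Euler's limit for `log Γ(x)`.
-/

open Complex Finset HurwitzZeta Filter Topology

section LinearInterpolation

variable {E : Type*} [NormedAddCommGroup E] [NormedSpace ℝ E] {f f' f'' : ℝ → E} {s : Set ℝ}
  {a b t C : ℝ}

theorem norm_image_sub_sub_smul_deriv_le (hs : Convex ℝ s)
    (hf : ∀ u ∈ s, HasDerivWithinAt f (f' u) s u) (hf' : ∀ u ∈ s, HasDerivWithinAt f' (f'' u) s u)
    (hC : ∀ u ∈ s, ‖f'' u‖ ≤ C) (ha : a ∈ s) (hb : b ∈ s) :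
    ‖f b - f a - (b - a) • f' a‖ ≤ C * ‖b - a‖ ^ 2 := by
  have hC₀ : 0 ≤ C := (norm_nonneg _).trans (hC a ha)
  have hseg : segment ℝ a b ⊆ s := hs.segment_subset ha hb
  have hderiv : ∀ u ∈ segment ℝ a b,
      HasDerivWithinAt (fun u ↦ f u - u • f' a) (f' u - (1 : ℝ) • f' a) (segment ℝ a b) u :=
    fun u hu ↦ ((hf u (hseg hu)).mono hseg).sub ((hasDerivWithinAt_id u _).smul_const (f' a))
  have hbound : ∀ u ∈ segment ℝ a b, ‖f' u - (1 : ℝ) • f' a‖ ≤ C * ‖b - a‖ := fun u hu ↦ by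
    rw [one_smul]
    exact (hs.norm_image_sub_le_of_norm_hasDerivWithin_le hf' hC ha (hseg hu)).trans
      (mul_le_mul_of_nonneg_left (norm_sub_le_of_mem_segment hu) hC₀)
  calc ‖f b - f a - (b - a) • f' a‖ = ‖(f b - b • f' a) - (f a - a • f' a)‖ := by
        congr 1; module
    _ ≤ C * ‖b - a‖ * ‖b - a‖ := (convex_segment a b).norm_image_sub_le_of_norm_hasDerivWithin_le
        hderiv hbound (left_mem_segment ℝ a b) (right_mem_segment ℝ a b)
    _ = C * ‖b - a‖ ^ 2 := by ring

theorem norm_lineMap_image_sub_image_lineMap_le (hs : Convex ℝ s)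
    (hf : ∀ u ∈ s, HasDerivWithinAt f (f' u) s u) (hf' : ∀ u ∈ s, HasDerivWithinAt f' (f'' u) s u)
    (hC : ∀ u ∈ s, ‖f'' u‖ ≤ C) (ha : a ∈ s) (hb : b ∈ s) (ht : t ∈ Set.Icc 0 1) :
    ‖AffineMap.lineMap (f a) (f b) t - f (AffineMap.lineMap a b t)‖ ≤ C * ‖b - a‖ ^ 2 := by
  obtain ⟨ht₀, ht₁⟩ := ht
  have hC₀ : 0 ≤ C := (norm_nonneg _).trans (hC a ha)
  set x := AffineMap.lineMap a b t with hx
  have hxs : x ∈ s := hs.lineMap_mem ha hb ⟨ht₀, ht₁⟩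
  have hax : a - x = -t * (b - a) := by rw [hx, AffineMap.lineMap_apply_ring]; ring
  have hbx : b - x = (1 - t) * (b - a) := by rw [hx, AffineMap.lineMap_apply_ring]; ring
  have hremainder {c : ℝ} (hc : c ∈ s) := norm_image_sub_sub_smul_deriv_le hs hf hf' hC hxs hc
  -- Both values are expanded about `x`, where the weights make the first-order terms cancel.
  calc ‖AffineMap.lineMap (f a) (f b) t - f x‖
      = ‖(1 - t) • (f a - f x - (a - x) • f' x) + t • (f b - f x - (b - x) • f' x)‖ := by
        rw [AffineMap.lineMap_apply_module, hax, hbx]; congr 1; module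
    _ ≤ (1 - t) * (C * ‖a - x‖ ^ 2) + t * (C * ‖b - x‖ ^ 2) := by
        refine (norm_add_le _ _).trans (add_le_add ?_ ?_)
        · rw [norm_smul, Real.norm_of_nonneg (sub_nonneg.2 ht₁)]
          exact mul_le_mul_of_nonneg_left (hremainder ha) (sub_nonneg.2 ht₁)
        · rw [norm_smul, Real.norm_of_nonneg ht₀]
          exact mul_le_mul_of_nonneg_left (hremainder hb) ht₀
    _ = t * (1 - t) * (C * ‖b - a‖ ^ 2) := by
        simp only [hax, hbx, norm_mul, Real.norm_eq_abs, mul_pow, sq_abs]; ring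
    _ ≤ C * ‖b - a‖ ^ 2 := mul_le_of_le_one_left (by positivity) (by nlinarith)

end LinearInterpolation

section Cpow

variable {c : ℝ}

theorem hasDerivAt_ofReal_cpow_of_pos (hc : 0 < c) (s : ℂ) :
    HasDerivAt (fun t : ℝ ↦ (t : ℂ) ^ s) (s * (c : ℂ) ^ (s - 1)) c := by
  simpa using ((hasDerivAt_id (c : ℂ)).cpow_const (.inl hc) (c := s)).comp_ofReal

theorem hasDerivAt_ofReal_cpow_neg (hc : 0 < c) (s : ℂ) :
    HasDerivAt (fun s : ℂ ↦ (c : ℂ) ^ (-s)) (-Real.log c * (c : ℂ) ^ (-s)) s := by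
  convert (hasDerivAt_neg s).const_cpow (.inl (ofReal_ne_zero.2 hc.ne')) using 1
  rw [ofReal_log hc.le]; ring

end Cpow

/-- The error at `n + 1 + x` of the linear interpolation of `t ↦ t ^ (-s)` between `n + 1` and
`n + 2`. Summing over `n` gives a series that represents `ζ_H(s; x) - ζ_R(s)`, up to elementary
terms, on the half-plane `Re s > -1`. -/
noncomputable def cpowInterpError (x : ℝ) (n : ℕ) (s : ℂ) : ℂ :=
  AffineMap.lineMap (((n + 1 : ℝ) : ℂ) ^ (-s)) (((n + 2 : ℝ) : ℂ) ^ (-s)) x -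
    ((n + 1 + x : ℝ) : ℂ) ^ (-s)

namespace cpowInterpError

variable {x : ℝ} {s : ℂ}

theorem norm_le (hx : x ∈ Set.Icc 0 1) (n : ℕ) (hs : -2 ≤ s.re) :
    ‖cpowInterpError x n s‖ ≤ ‖s‖ * ‖s + 1‖ * (n + 1 : ℝ) ^ (-s.re - 2) := by
  have hn : (0 : ℝ) < n + 1 := n.cast_add_one_pos
  have hpos {t : ℝ} (ht : t ∈ Set.Ici (n + 1 : ℝ)) : 0 < t := hn.trans_le ht
  have hbound : ∀ t ∈ Set.Ici (n + 1 : ℝ), ‖-s * ((-s - 1) * (t : ℂ) ^ (-s - 1 - 1))‖ ≤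
      ‖s‖ * ‖s + 1‖ * (n + 1 : ℝ) ^ (-s.re - 2) := fun t ht ↦ by
    have hexp : (-s - 1 - 1).re = -s.re - 2 := by simp only [sub_re, neg_re, one_re]; ring
    rw [norm_mul, norm_mul, norm_neg, ← neg_add', norm_neg, norm_cpow_eq_rpow_re_of_pos (hpos ht),
      neg_add', hexp, ← mul_assoc]
    exact mul_le_mul_of_nonneg_left
      (Real.rpow_le_rpow_of_nonpos hn ht (by linarith)) (by positivity)
  have hinterp := norm_lineMap_image_sub_image_lineMap_le (convex_Ici (n + 1 : ℝ))
    (fun t ht ↦ (hasDerivAt_ofReal_cpow_of_pos (hpos ht) (-s)).hasDerivWithinAt)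
    (fun t ht ↦ ((hasDerivAt_ofReal_cpow_of_pos (hpos ht) _).const_mul (-s)).hasDerivWithinAt)
    hbound (Set.self_mem_Ici) (b := (n + 2 : ℝ)) (by simp) hx
  have hpoint : AffineMap.lineMap (n + 1 : ℝ) (n + 2) x = n + 1 + x := by
    rw [AffineMap.lineMap_apply_ring]; ring
  have hgap : ‖((n : ℝ) + 2) - (n + 1)‖ = 1 := by norm_num
  rwa [hpoint, hgap, one_pow, mul_one] at hinterp

theorem exists_isOpen_summable_norm_le (hx : x ∈ Set.Icc 0 1) {z : ℂ} (hz : -1 < z.re) :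
    ∃ U : Set ℂ, IsOpen U ∧ z ∈ U ∧ ∃ u : ℕ → ℝ, Summable u ∧
      ∀ n, ∀ s ∈ U, ‖cpowInterpError x n s‖ ≤ u n := by
  obtain ⟨σ, hσ, hσz⟩ := exists_between hz
  obtain ⟨R, hzR⟩ := exists_gt ‖z‖
  refine ⟨{s | σ < s.re} ∩ {s | ‖s‖ < R}, (isOpen_lt continuous_const continuous_re).inter
    (isOpen_lt continuous_norm continuous_const), ⟨hσz, hzR⟩,
    fun n ↦ R * (R + 1) * (n + 1 : ℝ) ^ (-σ - 2), .mul_left _ ?_,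
    fun n s ⟨(hs : σ < s.re), (hsR : ‖s‖ < R)⟩ ↦ ?_⟩
  · exact_mod_cast (summable_nat_add_iff 1).2 (Real.summable_nat_rpow.2 (by linarith : -σ - 2 < -1))
  · have hR : 0 ≤ R := (norm_nonneg s).trans hsR.le
    have hs₁ : ‖s + 1‖ ≤ R + 1 := (norm_add_le s 1).trans (by rw [norm_one]; gcongr)
    refine (norm_le hx n (by linarith)).trans (?_ : _ ≤ R * (R + 1) * (n + 1 : ℝ) ^ (-σ - 2))
    gcongr
    exact le_add_of_nonneg_left n.cast_nonneg

theorem hasDerivAt (hx : 0 ≤ x) (n : ℕ) (s : ℂ) :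
    HasDerivAt (cpowInterpError x n)
      (AffineMap.lineMap (-Real.log (n + 1) * ((n + 1 : ℝ) : ℂ) ^ (-s))
          (-Real.log (n + 2) * ((n + 2 : ℝ) : ℂ) ^ (-s)) x -
        -Real.log (n + 1 + x) * ((n + 1 + x : ℝ) : ℂ) ^ (-s)) s := by
  have h₁ := hasDerivAt_ofReal_cpow_neg (c := n + 1) (by positivity) s
  have h₂ := hasDerivAt_ofReal_cpow_neg (c := n + 2) (by positivity) s
  have h₃ := hasDerivAt_ofReal_cpow_neg (c := n + 1 + x) (by positivity) s
  simp only [AffineMap.lineMap_apply_module]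
  refine (((h₁.const_smul (1 - x)).add (h₂.const_smul x)).sub h₃).congr_of_eventuallyEq (.of_eq ?_)
  ext s
  simp [cpowInterpError, AffineMap.lineMap_apply_module]

theorem differentiableOn_tsum (hx : x ∈ Set.Icc 0 1) :
    DifferentiableOn ℂ (fun s ↦ ∑' n, cpowInterpError x n s) {s | -1 < s.re} := fun z hz ↦ by
  obtain ⟨U, hU, hzU, u, hu, hbound⟩ := exists_isOpen_summable_norm_le hx hz
  exact ((differentiableOn_tsum_of_summable_norm hu
    (fun n s _ ↦ (hasDerivAt hx.1 n s).differentiableAt.differentiableWithinAt) hU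
    hbound).differentiableAt (hU.mem_nhds hzU)).differentiableWithinAt

theorem hasSum_deriv (hx : x ∈ Set.Icc 0 1) (hs : -1 < s.re) :
    HasSum (fun n ↦ deriv (cpowInterpError x n) s)
      (deriv (fun s ↦ ∑' n, cpowInterpError x n s) s) := by
  obtain ⟨U, hU, hsU, u, hu, hbound⟩ := exists_isOpen_summable_norm_le hx hs
  exact hasSum_deriv_of_summable_norm hu
    (fun n s _ ↦ (hasDerivAt hx.1 n s).differentiableAt.differentiableWithinAt) hU hbound hsU

theorem deriv_zero (hx : 0 ≤ x) (n : ℕ) :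
    deriv (cpowInterpError x n) 0 = (Real.log (n + 1 + x) -
      AffineMap.lineMap (Real.log (n + 1)) (Real.log (n + 2)) x : ℝ) := by
  rw [(hasDerivAt hx n 0).deriv]
  simp only [AffineMap.lineMap_apply_module, neg_zero, cpow_zero, mul_one, real_smul, smul_eq_mul]
  push_cast
  ring

end cpowInterpError

section Lerch

variable {x : ℝ} {s : ℂ}

theorem hasSum_ofReal_cpow_neg_hurwitzZeta (hx : x ∈ Set.Icc 0 1) (hs : 1 < s.re) :
    HasSum (fun n : ℕ ↦ ((n + x : ℝ) : ℂ) ^ (-s)) (hurwitzZeta x s) := by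
  simpa [cpow_neg] using hasSum_hurwitzZeta_of_one_lt_re hx hs

theorem hasSum_ofReal_cpow_neg_riemannZeta (hs : 1 < s.re) :
    HasSum (fun n : ℕ ↦ ((n + 1 : ℝ) : ℂ) ^ (-s)) (riemannZeta s) := by
  simpa [AddCircle.coe_period, hurwitzZeta_zero] using
    hasSum_ofReal_cpow_neg_hurwitzZeta (x := 1) (by simp) hs

theorem hasSum_cpowInterpError (hx : x ∈ Set.Icc 0 1) (hs : 1 < s.re) :
    HasSum (fun n ↦ cpowInterpError x n s)
      (riemannZeta s - hurwitzZeta x s + (x : ℂ) ^ (-s) - x) := by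
  have hζ₁ := hasSum_ofReal_cpow_neg_riemannZeta hs
  have hζ₂ := (hasSum_nat_add_iff' 1).2 hζ₁
  have hH := (hasSum_nat_add_iff' 1).2 (hasSum_ofReal_cpow_neg_hurwitzZeta hx hs)
  have hvalue : riemannZeta s - hurwitzZeta x s + (x : ℂ) ^ (-s) - x =
      (1 - x) • riemannZeta s +
        x • (riemannZeta s - ∑ i ∈ range 1, ((i + 1 : ℝ) : ℂ) ^ (-s)) -
        (hurwitzZeta x s - ∑ i ∈ range 1, ((i + x : ℝ) : ℂ) ^ (-s)) := by
    simp only [real_smul, ofReal_sub, ofReal_one, range_one, ofReal_add, ofReal_natCast,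
      sum_singleton, Nat.cast_zero, zero_add, one_cpow]
    ring
  rw [hvalue]
  refine (((hζ₁.const_smul (1 - x)).add (hζ₂.const_smul x)).sub hH).congr_fun fun n ↦ ?_
  simp only [cpowInterpError, AffineMap.lineMap_apply_module]
  norm_num [add_assoc]

theorem tsum_cpowInterpError (hx : x ∈ Set.Ioc 0 1) (hs : -1 < s.re) :
    ∑' n, cpowInterpError x n s =
      riemannZeta s - hurwitzZeta x s + (x : ℂ) ^ (-s) - x := by
  have hx' := Set.Ioc_subset_Icc_self hx
  have hopen : IsOpen {s : ℂ | -1 < s.re} := isOpen_lt continuous_const continuous_re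
  have hentire : Differentiable ℂ
      (fun s ↦ riemannZeta s - hurwitzZeta x s + (x : ℂ) ^ (-s) - x) := by
    have hζ := differentiable_hurwitzZeta_sub_hurwitzZeta 0 (x : UnitAddCircle)
    rw [hurwitzZeta_zero] at hζ
    exact (hζ.add fun s ↦ (hasDerivAt_ofReal_cpow_neg hx.1 s).differentiableAt).sub_const _
  refine ((cpowInterpError.differentiableOn_tsum hx').analyticOnNhd hopen
    |>.eqOn_of_preconnected_of_eventuallyEq (hentire.differentiableOn.analyticOnNhd hopen)
    (convex_halfSpace_re_gt _).isPreconnected (z₀ := 2) (by norm_num) ?_) hs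
  filter_upwards [(isOpen_lt continuous_const continuous_re).mem_nhds
    (show (1 : ℝ) < (2 : ℂ).re by norm_num)] with s hs
  exact (hasSum_cpowInterpError hx' hs).tsum_eq

theorem deriv_tsum_cpowInterpError_zero (hx : x ∈ Set.Ioc 0 1) :
    deriv (fun s ↦ ∑' n, cpowInterpError x n s) 0 =
      deriv riemannZeta 0 - deriv (hurwitzZeta x) 0 - Real.log x := by
  have heq : (fun s ↦ ∑' n, cpowInterpError x n s) =ᶠ[𝓝 0]
      fun s ↦ riemannZeta s - hurwitzZeta x s + (x : ℂ) ^ (-s) - x := by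
    filter_upwards [(isOpen_lt continuous_const continuous_re).mem_nhds
      (show (-1 : ℝ) < (0 : ℂ).re by norm_num)] with s hs
    exact tsum_cpowInterpError hx hs
  have hζ := (differentiableAt_riemannZeta zero_ne_one).hasDerivAt
  have hH := (differentiableAt_hurwitzZeta x zero_ne_one).hasDerivAt
  rw [heq.deriv_eq]
  refine (((hζ.sub hH).add (hasDerivAt_ofReal_cpow_neg hx.1 0)).sub_const _).deriv.trans ?_
  simp [sub_eq_add_neg]

theorem sum_log_sub_lineMap_log (x : ℝ) (n : ℕ) :
    ∑ i ∈ range n, (Real.log (i + 1 + x) -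
        AffineMap.lineMap (Real.log (i + 1)) (Real.log (i + 2)) x) =
      -(Real.BohrMollerup.logGammaSeq x n + Real.log x +
        x * (Real.log (n + 1) - Real.log n)) := by
  have hfactorial : Real.log n.factorial = ∑ i ∈ range n, Real.log (i + 1) := by
    rw [← prod_range_add_one_eq_factorial, Nat.cast_prod, Real.log_prod fun i _ ↦ by positivity]
    simp
  have htelescope : ∑ i ∈ range n, (Real.log (i + 2) - Real.log (i + 1)) = Real.log (n + 1) := by
    simpa [add_assoc, one_add_one_eq_two] using sum_range_sub (fun i : ℕ ↦ Real.log (i + 1)) n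
  have hshift : ∑ m ∈ range (n + 1), Real.log (x + m) =
      ∑ i ∈ range n, Real.log (i + 1 + x) + Real.log x := by
    simp [sum_range_succ', add_comm x]
  simp only [AffineMap.lineMap_apply_ring', sum_sub_distrib, sum_add_distrib, ← mul_sum]
  rw [← sum_sub_distrib, htelescope, Real.BohrMollerup.logGammaSeq, hfactorial, hshift]
  ring

theorem tendsto_sum_log_sub_lineMap_log (hx : 0 < x) :
    Tendsto (fun n ↦ ∑ i ∈ range n, (Real.log (i + 1 + x) -
        AffineMap.lineMap (Real.log (i + 1)) (Real.log (i + 2)) x)) atTop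
      (𝓝 (-(Real.log (Real.Gamma x) + Real.log x))) := by
  simp only [sum_log_sub_lineMap_log]
  simpa using (((Real.BohrMollerup.tendsto_log_gamma hx).add_const (Real.log x)).add
    (Real.tendsto_log_nat_add_one_sub_log.const_mul x)).neg

theorem deriv_hurwitzZeta_zero (hx : x ∈ Set.Ioc 0 1) :
    deriv (hurwitzZeta x) 0 = (Real.log (Real.Gamma x) - Real.log (2 * Real.pi) / 2 : ℝ) := by
  have hsum := (cpowInterpError.hasSum_deriv (Set.Ioc_subset_Icc_self hx)
    (show (-1 : ℝ) < (0 : ℂ).re by norm_num)).tendsto_sum_nat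
  simp only [cpowInterpError.deriv_zero hx.1.le, ← ofReal_sum] at hsum
  have hlim := tendsto_nhds_unique hsum
    ((continuous_ofReal.tendsto _).comp (tendsto_sum_log_sub_lineMap_log hx.1))
  rw [deriv_tsum_cpowInterpError_zero hx, deriv_riemannZeta_zero] at hlim
  rw [ofReal_sub, ofReal_div, ofReal_log Real.two_pi_pos.le]
  push_cast at hlim ⊢
  linear_combination -hlim

end Lerch

section Sums

variable {M : Type*} [AddCommMonoid M]

theorem sum_zmod_val (N : ℕ) [NeZero N] (f : ℕ → M) :
    ∑ j : ZMod N, f j.val = ∑ i ∈ range N, f i := by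
  cases N with
  | zero => exact absurd rfl (NeZero.ne 0)
  | succ n => exact Fin.sum_univ_eq_sum_range f (n + 1)

theorem sum_Icc_one_eq_sum_range {f : ℕ → M} (hf : f 0 = 0) (n : ℕ) :
    ∑ i ∈ Icc 1 (n - 1), f i = ∑ i ∈ range n, f i := by
  refine sum_subset (fun i hi ↦ by grind) fun i hi hi' ↦ ?_
  obtain rfl : i = 0 := by grind
  exact hf

theorem tsum_prod_comp_add {G : Type*} [AddCommGroup G] [UniformSpace G] [IsUniformAddGroup G]
    [CompleteSpace G] [T0Space G] {f : ℕ → G} (hf : Summable fun p : ℕ × ℕ ↦ f (p.1 + p.2)) :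
    ∑' p : ℕ × ℕ, f (p.1 + p.2) = ∑' k, (k + 1) • f k := by
  let e := HasAntidiagonal.sigmaAntidiagonalEquivProd (A := ℕ)
  have hfiber (k : ℕ) (c : antidiagonal k) : f ((e ⟨k, c⟩).1 + (e ⟨k, c⟩).2) = f k :=
    congrArg f (mem_antidiagonal.1 c.2)
  rw [← e.tsum_eq]
  refine (Summable.tsum_sigma (f := fun c ↦ f ((e c).1 + (e c).2)) (e.summable_iff.2 hf)).trans ?_
  simp [hfiber]

end Sums

theorem sum_hurwitzZeta_toAddCircle (N : ℕ) [NeZero N] {s : ℂ} (hs : 1 < s.re) :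
    ∑ j : ZMod N, hurwitzZeta (ZMod.toAddCircle j) s = N ^ s * riemannZeta s := by
  have hN : (N : ℂ) ≠ 0 := NeZero.ne _
  have hL := ZMod.LFunction_eq_LSeries (1 : ZMod N → ℂ) hs
  rw [ZMod.LFunction] at hL
  simp only [Pi.one_apply, one_mul] at hL
  change _ = LSeries 1 s at hL
  rw [← LSeries_one_eq_riemannZeta hs, ← hL, ← mul_assoc, ← cpow_add _ _ hN, add_neg_cancel,
    cpow_zero, one_mul]

section Barnes

variable {a b x : ℝ} {s : ℂ}

theorem summable_barnesZeta (ha : 0 < a) (hb : 0 < b) (hx : 0 < x) (hs : 2 < s.re) :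
    Summable fun p : ℕ × ℕ ↦ ((a * p.1 + b * p.2 + x : ℝ) : ℂ) ^ (-s) := by
  let c := min (min a b) x
  have hc : 0 < c := lt_min (lt_min ha hb) hx
  have hzeta : Summable fun n : ℕ ↦ (n + 1 : ℝ) ^ (-s.re / 2) := by
    exact_mod_cast (summable_nat_add_iff 1).2
      (Real.summable_nat_rpow.2 (by linarith : -s.re / 2 < -1))
  have hnonneg : (0 : ℕ → ℝ) ≤ fun n : ℕ ↦ (n + 1 : ℝ) ^ (-s.re / 2) := fun n ↦ by positivity
  refine .of_norm_bounded ((hzeta.mul_of_nonneg hzeta hnonneg hnonneg).mul_left (c ^ (-s.re)))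
    fun ⟨m, n⟩ ↦ ?_
  -- This lower bound separates the two indices.
  have hlower : c * √((m + 1) * (n + 1)) ≤ a * m + b * n + x := calc
    c * √((m + 1) * (n + 1)) ≤ c * (m + n + 1) := by
      gcongr
      refine Real.sqrt_le_iff.2 ⟨by positivity, ?_⟩
      have : (0 : ℝ) ≤ m ^ 2 + n ^ 2 + m * n + m + n := by positivity
      linarith
    _ = c * m + c * n + c := by ring
    _ ≤ a * m + b * n + x := by
      gcongr
      exacts [(min_le_left _ _).trans (min_le_left _ _),
        (min_le_left _ _).trans (min_le_right _ _), min_le_right _ _]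
  calc ‖((a * m + b * n + x : ℝ) : ℂ) ^ (-s)‖ = (a * m + b * n + x) ^ (-s.re) := by
        rw [norm_cpow_eq_rpow_re_of_pos (by positivity), neg_re]
    _ ≤ (c * √((m + 1) * (n + 1))) ^ (-s.re) :=
        Real.rpow_le_rpow_of_nonpos (by positivity) hlower (by linarith)
    _ = c ^ (-s.re) * ((m + 1 : ℝ) ^ (-s.re / 2) * (n + 1 : ℝ) ^ (-s.re / 2)) := by
        rw [Real.mul_rpow hc.le (Real.sqrt_nonneg _), Real.sqrt_eq_rpow,
          ← Real.rpow_mul (by positivity), Real.mul_rpow (by positivity) (by positivity)]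
        ring_nf

theorem barnesZeta_div_natCast (w : ℕ) [NeZero w] (ha : 0 < a) (hb : 0 < b) (hx : 0 < x)
    (hs : 2 < s.re) :
    barnesZeta s (a / w) b x = ∑ j : ZMod w, barnesZeta s a b (x + a * (j.val / w)) := by
  have hw : (0 : ℝ) < w := Nat.cast_pos.2 (NeZero.pos w)
  have hsum := summable_barnesZeta (div_pos ha hw) hb hx hs
  have hrow (j : ZMod w) :=
    summable_barnesZeta (x := x + a * (j.val / w)) ha hb (by positivity) hs
  calc barnesZeta s (a / w) b x
      = ∑' m : ℕ, ∑' n : ℕ, ((a / w * m + b * n + x : ℝ) : ℂ) ^ (-s) := hsum.tsum_prod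
    _ = ∑ j : ZMod w, ∑' m : ℕ, ∑' n : ℕ,
          ((a / w * (j.val + w * m : ℕ) + b * n + x : ℝ) : ℂ) ^ (-s) :=
        Nat.sumByResidueClasses hsum.prod w
    _ = ∑ j : ZMod w, barnesZeta s a b (x + a * (j.val / w)) := by
        refine sum_congr rfl fun j _ ↦ Eq.trans ?_ (hrow j).tsum_prod.symm
        refine tsum_congr₂ fun m n ↦ ?_
        congr 2
        push_cast
        field_simp
        ring

theorem barnesZeta_one_one_one_add (ha : a ∈ Set.Icc 0 1) (hs : 2 < s.re) :
    barnesZeta s 1 1 (1 + a) = hurwitzZeta a (s - 1) - a * hurwitzZeta a s := by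
  have hsum : Summable fun p : ℕ × ℕ ↦ (((p.1 + p.2 : ℕ) + 1 + a : ℝ) : ℂ) ^ (-s) := by
    simpa [add_assoc] using summable_barnesZeta one_pos one_pos (by linarith [ha.1] : 0 < 1 + a) hs
  have hterm (k : ℕ) : k * ((k + a : ℝ) : ℂ) ^ (-s) =
      ((k + a : ℝ) : ℂ) ^ (-(s - 1)) - a * ((k + a : ℝ) : ℂ) ^ (-s) := by
    rcases eq_or_ne (k + a) 0 with hka | hka
    · obtain ⟨hk, rfl⟩ := (add_eq_zero_iff_of_nonneg k.cast_nonneg ha.1).1 hka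
      have hs₁ : 1 - s ≠ 0 := fun h ↦ by norm_num [← sub_eq_zero.1 h] at hs
      simp [Nat.cast_eq_zero.1 hk, hs₁]
    · have hexp : -(s - 1) = -s + 1 := by ring
      rw [hexp, cpow_add _ _ (ofReal_ne_zero.2 hka), cpow_one]
      push_cast
      ring
  have hshift : HasSum (fun k : ℕ ↦ k * ((k + a : ℝ) : ℂ) ^ (-s))
      (hurwitzZeta a (s - 1) - a * hurwitzZeta a s) := by
    simp only [hterm]
    exact (hasSum_ofReal_cpow_neg_hurwitzZeta ha (by rw [sub_re, one_re]; linarith)).sub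
      ((hasSum_ofReal_cpow_neg_hurwitzZeta ha (by linarith)).mul_left _)
  calc barnesZeta s 1 1 (1 + a)
      = ∑' p : ℕ × ℕ, (((p.1 + p.2 : ℕ) + 1 + a : ℝ) : ℂ) ^ (-s) := by
        simp [barnesZeta, add_assoc]
    _ = ∑' k : ℕ, (k + 1) • ((k + 1 + a : ℝ) : ℂ) ^ (-s) :=
        tsum_prod_comp_add (f := fun k : ℕ ↦ ((k + 1 + a : ℝ) : ℂ) ^ (-s)) hsum
    _ = ∑' k : ℕ, k * ((k + a : ℝ) : ℂ) ^ (-s) := by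
        rw [hshift.summable.tsum_eq_zero_add]
        simp
    _ = hurwitzZeta a (s - 1) - a * hurwitzZeta a s := hshift.tsum_eq

end Barnes

section Continuation

/-- The continuation of `s ↦ ζ_B(s; 1/w, 1, 1)` to `s ≠ 1, 2`, in terms of the Riemann and Hurwitz
zeta functions. -/
noncomputable def barnesContinuation (w : ℕ) (s : ℂ) : ℂ :=
  (w : ℂ) ^ (s - 1) * riemannZeta (s - 1) -
    (1 / w : ℂ) * ∑ j ∈ Icc 1 (w - 1), (j : ℂ) * hurwitzZeta ((j / w : ℝ) : UnitAddCircle) s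

variable (w : ℕ) [NeZero w] {s : ℂ}

theorem barnesZeta_one_div_natCast (hs : 2 < s.re) :
    barnesZeta s (1 / w) 1 1 = barnesContinuation w s := by
  have hdist := sum_hurwitzZeta_toAddCircle w (s := s - 1) (by rw [sub_re, one_re]; linarith)
  simp only [ZMod.toAddCircle_apply] at hdist
  have hunit (j : ZMod w) : (j.val / w : ℝ) ∈ Set.Icc 0 1 :=
    ⟨by positivity, div_le_one_of_le₀ (Nat.cast_le.2 j.val_lt.le) w.cast_nonneg⟩
  calc barnesZeta s (1 / w) 1 1
      = ∑ j : ZMod w, barnesZeta s 1 1 (1 + j.val / w) := by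
        simpa using barnesZeta_div_natCast w one_pos one_pos one_pos hs
    _ = ∑ j : ZMod w, (hurwitzZeta ((j.val / w : ℝ) : UnitAddCircle) (s - 1) -
          (j.val / w : ℝ) * hurwitzZeta ((j.val / w : ℝ) : UnitAddCircle) s) :=
        sum_congr rfl fun j _ ↦ barnesZeta_one_one_one_add (hunit j) hs
    _ = (w : ℂ) ^ (s - 1) * riemannZeta (s - 1) -
          ∑ j ∈ range w, (j / w : ℝ) * hurwitzZeta ((j / w : ℝ) : UnitAddCircle) s := by
        rw [sum_sub_distrib, hdist, sum_zmod_val w fun j ↦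
          ((j / w : ℝ) : ℂ) * hurwitzZeta ((j / w : ℝ) : UnitAddCircle) s]
    _ = barnesContinuation w s := by
        rw [barnesContinuation, sum_Icc_one_eq_sum_range (by simp), mul_sum]
        congr 1
        refine sum_congr rfl fun j _ ↦ ?_
        push_cast
        ring

theorem hasDerivAt_barnesContinuation (hs₁ : s ≠ 1) (hs₂ : s ≠ 2) :
    HasDerivAt (barnesContinuation w)
      ((w : ℂ) ^ (s - 1) * Real.log w * riemannZeta (s - 1) +
          (w : ℂ) ^ (s - 1) * deriv riemannZeta (s - 1) -
        (1 / w : ℂ) * ∑ j ∈ Icc 1 (w - 1),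
          (j : ℂ) * deriv (hurwitzZeta ((j / w : ℝ) : UnitAddCircle)) s) s := by
  have hpow : HasDerivAt (fun s : ℂ ↦ (w : ℂ) ^ (s - 1)) ((w : ℂ) ^ (s - 1) * Real.log w) s := by
    simpa using ((hasDerivAt_id s).sub_const 1).const_cpow (.inl (NeZero.ne (w : ℂ)))
  have hζ : HasDerivAt (fun s ↦ riemannZeta (s - 1)) (deriv riemannZeta (s - 1)) s :=
    (differentiableAt_riemannZeta fun h ↦ hs₂ (by linear_combination h)).hasDerivAt.comp_sub_const
  exact (hpow.mul hζ).sub (.const_mul _ (.fun_sum fun j _ ↦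
    (differentiableAt_hurwitzZeta _ hs₁).hasDerivAt.const_mul _))

theorem eqOn_barnesContinuation {Z : ℂ → ℂ} (hZ : DifferentiableOn ℂ Z {s | s ≠ 1 ∧ s ≠ 2})
    (hZeq : ∀ s : ℂ, 2 < s.re → Z s = barnesZeta s (1 / w) 1 1) :
    Set.EqOn Z (barnesContinuation w) {s | s ≠ 1 ∧ s ≠ 2} := by
  have hcompl : {s : ℂ | s ≠ 1 ∧ s ≠ 2} = {1, 2}ᶜ := by ext; simp
  have hopen : IsOpen {s : ℂ | s ≠ 1 ∧ s ≠ 2} :=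
    hcompl ▸ (Set.toFinite _).isClosed.isOpen_compl
  have hpreconnected : IsPreconnected {s : ℂ | s ≠ 1 ∧ s ≠ 2} :=
    hcompl ▸ ((Set.toFinite _).countable.isConnected_compl_of_one_lt_rank (by simp)).isPreconnected
  have hcont : DifferentiableOn ℂ (barnesContinuation w) {s | s ≠ 1 ∧ s ≠ 2} := fun s hs ↦
    (hasDerivAt_barnesContinuation w hs.1 hs.2).differentiableAt.differentiableWithinAt
  refine (hZ.analyticOnNhd hopen).eqOn_of_preconnected_of_eventuallyEq
    (hcont.analyticOnNhd hopen) hpreconnected (z₀ := 3) (by norm_num) ?_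
  filter_upwards [(isOpen_lt continuous_const continuous_re).mem_nhds
    (show (2 : ℝ) < (3 : ℂ).re by norm_num)] with s hs
  rw [hZeq s hs, barnesZeta_one_div_natCast w hs]

theorem riemannZeta_neg_one : riemannZeta (-1) = -1 / 12 := by
  rw [← Nat.cast_one (R := ℂ), riemannZeta_neg_nat_eq_bernoulli 1, one_add_one_eq_two,
    bernoulli_two]
  norm_num

theorem sum_mul_deriv_hurwitzZeta_zero :
    ∑ j ∈ Icc 1 (w - 1), (j : ℂ) * deriv (hurwitzZeta ((j / w : ℝ) : UnitAddCircle)) 0 =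
      ∑ j ∈ Icc 1 (w - 1), (j : ℂ) * (Real.log (Real.Gamma ((j : ℝ) / w)) : ℂ) -
        w * (w - 1) / 4 * Real.log (2 * Real.pi) := by
  have hw : (0 : ℝ) < w := Nat.cast_pos.2 (NeZero.pos w)
  have hlerch : ∀ j ∈ Icc 1 (w - 1),
      (j : ℂ) * deriv (hurwitzZeta ((j / w : ℝ) : UnitAddCircle)) 0 =
        j * (Real.log (Real.Gamma (j / w)) : ℂ) - j * (Real.log (2 * Real.pi) / 2) := fun j hj ↦ by
    have hj' := mem_Icc.1 hj
    have hmem : (j / w : ℝ) ∈ Set.Ioc 0 1 :=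
      ⟨div_pos (Nat.cast_pos.2 hj'.1) hw, (div_le_one hw).2 (Nat.cast_le.2 (by lia))⟩
    rw [deriv_hurwitzZeta_zero hmem]
    push_cast
    ring
  have hgauss : ∑ j ∈ Icc 1 (w - 1), (j : ℂ) = w * (w - 1) / 2 := by
    rw [sum_Icc_one_eq_sum_range Nat.cast_zero, eq_div_iff two_ne_zero, ← Nat.cast_sum]
    simpa [Nat.cast_pred (NeZero.pos w)] using
      congrArg (Nat.cast (R := ℂ)) (sum_range_id_mul_two w)
  rw [sum_congr rfl hlerch, sum_sub_distrib, ← sum_mul, hgauss]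
  ring

theorem deriv_barnesContinuation_zero :
    deriv (barnesContinuation w) 0 =
      (1 / w : ℂ) * deriv riemannZeta (-1) - Real.log w / (12 * w) -
        (1 / w : ℂ) * ∑ j ∈ Icc 1 (w - 1),
          (j : ℂ) * (Real.log (Real.Gamma ((j : ℝ) / w)) : ℂ) +
        ((w - 1) / 4 : ℂ) * Real.log (2 * Real.pi) := by
  have hw : (w : ℂ) ≠ 0 := NeZero.ne _
  rw [(hasDerivAt_barnesContinuation w zero_ne_one two_ne_zero.symm).deriv, zero_sub,
    riemannZeta_neg_one, cpow_neg_one, sum_mul_deriv_hurwitzZeta_zero]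
  field_simp
  ring

end Continuation

/-- For a positive integer `w`, the derivative at `s = 0` of the analytic continuation `Z` of
`s ↦ ζ_B(s; 1/w, 1, 1)` (holomorphic away from the poles at `s = 1, 2`) satisfies
`ζ_B'(0; 1/w, 1, 1) = (1/w) ζ_R'(−1) − log w/(12w) − (1/w) Σ_{j=1}^{w−1} j log Γ(j/w)
+ ((w−1)/4) log 2π`. -/
theorem deriv_barnesZeta_zero (w : ℕ) (hw : 0 < w) (Z : ℂ → ℂ)
    (hZ : DifferentiableOn ℂ Z {s : ℂ | s ≠ 1 ∧ s ≠ 2})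
    (hZeq : ∀ s : ℂ, 2 < s.re → Z s = barnesZeta s (1 / w : ℝ) 1 1) :
    deriv Z 0 =
      (1 / w : ℂ) * deriv riemannZeta (-1) - ((Real.log w : ℂ)) / (12 * w) -
        (1 / w : ℂ) * ∑ j ∈ Finset.Icc 1 (w - 1),
          (j : ℂ) * (Real.log (Real.Gamma ((j : ℝ) / w)) : ℂ) +
        (((w : ℂ) - 1) / 4) * (Real.log (2 * Real.pi) : ℂ) := by
  have : NeZero w := ⟨hw.ne'⟩
  have hnhds : {s : ℂ | s ≠ 1 ∧ s ≠ 2} ∈ 𝓝 0 :=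
    inter_mem (isOpen_ne.mem_nhds zero_ne_one) (isOpen_ne.mem_nhds two_ne_zero.symm)
  rw [((eqOn_barnesContinuation w hZ hZeq).eventuallyEq_of_mem hnhds).deriv_eq]
  exact deriv_barnesContinuation_zero w
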